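/- Let $n \geq 1$. For a permutation $\pi$ of $[n]=\{1,\dots,n\}$, an index $i\in\{1,\dots,n-1\}$ is a descent of $\pi$ if $\pi(i)>\pi(i+1)$, and an index $i\in\{2,\dots,n-1\}$ is a peak of $\pi$ if $\pi(i-1)<\pi(i)>\pi(i+1)$; an involution of length $n$ is a permutation $\pi$ of $[n]$ with $\pi^2$ equal to the identity. Then for all integers $j,k\geq 0$, the number of involutions of length $n$ with exactly $j$ peaks and exactly $k$ descents equals the number of involutions of length $n$ with exactly $j$ peaks and exactly $n-1-k$ descents. (If $k>n-1$, both numbers are $0$.) -/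

import Mathlib

/-- The letter `π(i)` of the one-line notation of a permutation of `[n] = {1, …, n}`, both positions
and values being counted from `1`; a permutation of `[n]` is encoded as a permutation of `Fin n`
by shifting by one. The value outside `1 ≤ i ≤ n` is never used below. -/
def oneLine (n : ℕ) (π : Equiv.Perm (Fin n)) (i : ℕ) : ℕ :=
  if h : 1 ≤ i ∧ i ≤ n then (π ⟨i - 1, by omega⟩).val + 1 else 0

/-- The number of `i ∈ {1, …, n-1}` with `π(i) > π(i+1)`. -/
def des (n : ℕ) (π : Equiv.Perm (Fin n)) : ℕ :=
  ((Finset.Icc 1 (n - 1)).filter fun i => oneLine n π (i + 1) < oneLine n π i).card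

/-- The number of `i ∈ {2, …, n-1}` with `π(i-1) < π(i) > π(i+1)`. -/
def pk (n : ℕ) (π : Equiv.Perm (Fin n)) : ℕ :=
  ((Finset.Icc 2 (n - 1)).filter fun i =>
    oneLine n π (i - 1) < oneLine n π i ∧ oneLine n π (i + 1) < oneLine n π i).card

open Finset

/-! ### Equidistribution of set-valued statistics -/

/-- Two set-valued statistics with the same cumulative distribution are equidistributed. -/
theorem card_filter_eq_of_card_filter_subset {α : Type*} (s : Finset α) (f g : α → Finset ℕ)
    (h : ∀ S, #{x ∈ s | f x ⊆ S} = #{x ∈ s | g x ⊆ S}) (S : Finset ℕ) :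
    #{x ∈ s | f x = S} = #{x ∈ s | g x = S} := by
  have key : ∀ (f : α → Finset ℕ) (S : Finset ℕ),
      #{x ∈ s | f x ⊆ S} = #{x ∈ s | f x = S} + ∑ T ∈ S.ssubsets, #{x ∈ s | f x = T} := by
    intro f S
    rw [card_eq_sum_card_fiberwise (f := f) (t := S.powerset)
      (fun x hx => by simpa using (mem_filter.1 hx).2)]
    have : ∀ T ∈ S.powerset, #{x ∈ {x ∈ s | f x ⊆ S} | f x = T} = #{x ∈ s | f x = T} := by
      intro T hT
      rw [filter_filter]
      congr 1
      apply filter_congr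
      intro x _
      rw [mem_powerset] at hT
      constructor
      · exact fun h => h.2
      · rintro rfl
        exact ⟨hT, rfl⟩
    rw [sum_congr rfl this, ssubsets,
      add_sum_erase _ (fun T => #{x ∈ s | f x = T}) (mem_powerset_self S)]
  induction S using Finset.strongInduction with
  | H S ih =>
    have h1 := h S
    rw [key f, key g, sum_congr rfl fun T hT => ih T (mem_ssubsets.1 hT)] at h1
    omega

/-- Equidistributed set-valued statistics satisfy any property equally often. -/
theorem card_filter_comp_eq_of_card_filter_eq {α : Type*} (s : Finset α) (f g : α → Finset ℕ)
    (h : ∀ S, #{x ∈ s | f x = S} = #{x ∈ s | g x = S}) (Q : Finset ℕ → Prop) [DecidablePred Q] :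
    #{x ∈ s | Q (f x)} = #{x ∈ s | Q (g x)} := by
  have key : ∀ (f : α → Finset ℕ) (U : Finset (Finset ℕ)), (∀ x ∈ s, f x ∈ U) →
      #{x ∈ s | Q (f x)} = ∑ T ∈ U with Q T, #{x ∈ s | f x = T} := by
    intro f U hU
    rw [card_eq_sum_card_fiberwise (f := f) (t := {T ∈ U | Q T})
      (fun x hx => by
        have := mem_filter.1 hx
        simpa using ⟨hU x this.1, this.2⟩)]
    refine sum_congr rfl fun T hT => ?_
    rw [filter_filter]
    congr 1
    apply filter_congr
    intro x _
    constructor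
    · exact fun h => h.2
    · rintro rfl
      exact ⟨(mem_filter.1 hT).2, rfl⟩
  rw [key f (s.image f ∪ s.image g) fun x hx => mem_union_left _ (mem_image_of_mem _ hx),
    key g (s.image f ∪ s.image g) fun x hx => mem_union_right _ (mem_image_of_mem _ hx)]
  exact sum_congr rfl fun T _ => h T

/-! ### Extremal representatives of double cosets of Young subgroups -/

/-- Monotone functions on a finite set are determined by the sizes of their fibers. -/
theorem eqOn_of_monotoneOn_of_card_fiber_eq {α β : Type*} [LinearOrder α] [LinearOrder β]
    (A : Finset α) (f g : α → β) (hf : MonotoneOn f A) (hg : MonotoneOn g A)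
    (h : ∀ d, #{x ∈ A | f x = d} = #{x ∈ A | g x = d}) : Set.EqOn f g A := by
  have hmap : A.val.map f = A.val.map g := by
    ext d
    have := h d
    simpa [Multiset.count_map, Finset.card, eq_comm] using this
  have hle : ∀ d, #{x ∈ A | f x ≤ d} = #{x ∈ A | g x ≤ d} := by
    intro d
    have := congrArg (Multiset.countP (· ≤ d)) hmap
    simpa [Multiset.countP_map, Finset.card] using this
  have aux : ∀ f g : α → β, MonotoneOn f A → MonotoneOn g A →
      (∀ d, #{x ∈ A | f x ≤ d} = #{x ∈ A | g x ≤ d}) → ∀ i ∈ A, ¬ f i < g i := by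
    intro f g hf hg hle i hi hlt
    have hss : {x ∈ A | g x ≤ f i} ⊂ {x ∈ A | f x ≤ f i} := by
      rw [Finset.ssubset_iff_of_subset]
      · exact ⟨i, by simp [hi], by simp [hlt]⟩
      · intro x hx
        rw [mem_filter] at hx ⊢
        refine ⟨hx.1, hf hx.1 hi ?_⟩
        by_contra! hix
        exact absurd (hg hi hx.1 hix.le) (not_le.2 (hx.2.trans_lt hlt))
    exact absurd (hle (f i)) (card_lt_card hss).ne'
  intro i hi
  exact le_antisymm (not_lt.1 (aux g f hg hf (fun d => (hle d).symm) i hi))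
    (not_lt.1 (aux f g hf hg hle i hi))

/-- The number of positions in block `a` whose values lie in block `d`. -/
def blockCount {α β γ : Type*} [Fintype α] [DecidableEq β] [DecidableEq γ] (b : α → β) (c : α → γ)
    (σ : Equiv.Perm α) (a : β) (d : γ) : ℕ :=
  #{i | b i = a ∧ c (σ i) = d}

/-- `σ` increases along every fiber of `b`. -/
def BlockIncreasing {α β : Type*} [LT α] (b : α → β) (σ : Equiv.Perm α) : Prop :=
  ∀ i j, i < j → b i = b j → σ i < σ j

/-- `σ` decreases along every fiber of `b`. -/
def BlockDecreasing {α β : Type*} [LT α] (b : α → β) (σ : Equiv.Perm α) : Prop :=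
  ∀ i j, i < j → b i = b j → σ j < σ i

theorem blockCount_inv {α β γ : Type*} [Fintype α] [DecidableEq β] [DecidableEq γ]
    (b : α → β) (c : α → γ) (σ : Equiv.Perm α) (a : β) (d : γ) :
    blockCount c b σ⁻¹ d a = blockCount b c σ a d := by
  unfold blockCount
  refine card_equiv σ⁻¹ fun i => ?_
  simp [and_comm]

theorem blockCount_mul_swap {α β γ : Type*} [Fintype α] [DecidableEq α] [DecidableEq β]
    [DecidableEq γ] (b : α → β) (c : α → γ) (σ : Equiv.Perm α) {i j : α} (hij : b i = b j) :
    blockCount b c (σ * Equiv.swap i j) = blockCount b c σ := by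
  funext a d
  unfold blockCount
  refine card_equiv (Equiv.swap i j) fun x => ?_
  have : b (Equiv.swap i j x) = b x := by
    rw [Equiv.swap_apply_def]
    split_ifs with h1 h2
    · rw [h1, hij]
    · rw [h2, hij]
    · rfl
  rw [mem_filter, mem_filter, this, Equiv.Perm.mul_apply]
  simp

theorem eq_of_blockCount_eq {α β γ : Type*} [Fintype α] [LinearOrder α] [DecidableEq β]
    [LinearOrder γ] (b : α → β) (c : α → γ) (hc : Monotone c) (σ τ : Equiv.Perm α)
    (hσ : BlockIncreasing b σ) (hσ' : BlockIncreasing c σ⁻¹)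
    (hτ : BlockIncreasing b τ) (hτ' : BlockIncreasing c τ⁻¹)
    (h : blockCount b c σ = blockCount b c τ) : σ = τ := by
  have hmono : ∀ σ : Equiv.Perm α, BlockIncreasing b σ → ∀ a,
      MonotoneOn (fun i => c (σ i)) ({i | b i = a} : Finset α) := by
    intro σ hσ a i hi j hj hij
    simp only [coe_filter, mem_univ, true_and, Set.mem_ofPred_eq] at hi hj
    rcases hij.eq_or_lt with rfl | hij
    · exact le_rfl
    · exact hc (hσ i j hij (hi.trans hj.symm)).le
  have hblock : ∀ i, c (σ i) = c (τ i) := by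
    intro i
    refine eqOn_of_monotoneOn_of_card_fiber_eq _ _ _ (hmono σ hσ (b i)) (hmono τ hτ (b i)) ?_
      (by simp : i ∈ _)
    intro d
    have := congrFun (congrFun h (b i)) d
    simpa [blockCount, filter_filter] using this
  have hlt : ∀ σ : Equiv.Perm α, BlockIncreasing c σ⁻¹ → ∀ i j,
      σ i < σ j ↔ c (σ i) < c (σ j) ∨ (c (σ i) = c (σ j) ∧ i < j) := by
    intro σ hσ i j
    constructor
    · intro hij
      rcases (hc hij.le).lt_or_eq with h | h
      · exact Or.inl h
      · exact Or.inr ⟨h, by simpa using hσ _ _ hij h⟩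
    · rintro (h | ⟨h, hij⟩)
      · exact hc.reflect_lt h
      · by_contra! hle
        rcases hle.eq_or_lt with he | hlt
        · exact hij.ne' (σ.injective he)
        · exact absurd (by simpa using hσ _ _ hlt h.symm) hij.not_gt
  have hiff : ∀ i j, σ i < σ j ↔ τ i < τ j := by
    intro i j
    rw [hlt σ hσ', hlt τ hτ', hblock, hblock]
  have hs : StrictMono (σ * τ⁻¹) := by
    intro i j hij
    have := (hiff (τ⁻¹ i) (τ⁻¹ j)).2 (by simpa using hij)
    simpa using this
  have hid : hs.orderIsoOfSurjective _ (σ * τ⁻¹).surjective = OrderIso.refl α :=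
    Subsingleton.elim _ _
  refine Equiv.ext fun i => ?_
  have := congrArg (fun e : α ≃o α => e (τ i)) hid
  simpa using this

/-- Exchanging the entries of an inversion increases `∑ i, i * σ i` strictly. -/
theorem sum_mul_lt_sum_mul_swap {n : ℕ} (σ : Equiv.Perm (Fin n)) {i j : Fin n} (hij : i < j)
    (h : σ j < σ i) :
    ∑ x : Fin n, (x : ℕ) * (σ x : ℕ) < ∑ x : Fin n, (x : ℕ) * ((σ * Equiv.swap i j) x : ℕ) := by
  have hne := hij.ne
  rw [← add_sum_erase _ _ (mem_univ i),
    ← add_sum_erase (univ.erase i) _ (a := j) (by simp [hne.symm]),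
    ← add_sum_erase univ (fun x : Fin n => (x : ℕ) * ((σ * Equiv.swap i j) x : ℕ)) (mem_univ i),
    ← add_sum_erase (univ.erase i) (fun x : Fin n => (x : ℕ) * ((σ * Equiv.swap i j) x : ℕ)) (a := j)
      (by simp [hne.symm])]
  have hrest : ∑ x ∈ (univ.erase i).erase j, (x : ℕ) * ((σ * Equiv.swap i j) x : ℕ)
      = ∑ x ∈ (univ.erase i).erase j, (x : ℕ) * (σ x : ℕ) := by
    refine sum_congr rfl fun x hx => ?_
    simp only [mem_erase] at hx
    rw [Equiv.Perm.mul_apply, Equiv.swap_apply_of_ne_of_ne hx.2.1 hx.1]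
  rw [hrest]
  simp only [Equiv.Perm.mul_apply, Equiv.swap_apply_left, Equiv.swap_apply_right]
  have h1 : (i : ℕ) < j := hij
  have h2 : (σ j : ℕ) < σ i := h
  nlinarith

theorem sum_mul_inv {n : ℕ} (σ : Equiv.Perm (Fin n)) :
    ∑ x : Fin n, (x : ℕ) * (σ⁻¹ x : ℕ) = ∑ x : Fin n, (x : ℕ) * (σ x : ℕ) := by
  rw [← Equiv.sum_comp σ]
  simp [mul_comm]

theorem exists_blockIncreasing {n : ℕ} {β γ : Type*} [DecidableEq β] [DecidableEq γ]
    (b : Fin n → β) (c : Fin n → γ) (σ : Equiv.Perm (Fin n)) :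
    ∃ τ, blockCount b c τ = blockCount b c σ ∧ BlockIncreasing b τ ∧ BlockIncreasing c τ⁻¹ := by
  classical
  obtain ⟨τ, hτ, hmax⟩ := exists_max_image
    ({τ | blockCount b c τ = blockCount b c σ} : Finset (Equiv.Perm (Fin n)))
    (fun τ => ∑ x : Fin n, (x : ℕ) * (τ x : ℕ)) ⟨σ, by simp⟩
  simp only [mem_filter, mem_univ, true_and] at hτ hmax
  refine ⟨τ, hτ, fun i j hij hb => ?_, fun i j hij hb => ?_⟩
  · by_contra! hle
    have hlt := hle.lt_of_ne (τ.injective.ne hij.ne')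
    exact absurd (hmax _ ((blockCount_mul_swap b c τ hb).trans hτ))
      (sum_mul_lt_sum_mul_swap τ hij hlt).not_ge
  · by_contra! hle
    have hlt := hle.lt_of_ne (τ⁻¹.injective.ne hij.ne')
    have h1 := sum_mul_lt_sum_mul_swap τ⁻¹ hij hlt
    rw [sum_mul_inv, ← sum_mul_inv (τ⁻¹ * _)] at h1
    refine absurd (hmax _ ?_) h1.not_ge
    rw [← hτ]
    funext a d
    rw [← blockCount_inv, inv_inv, blockCount_mul_swap _ _ _ hb, blockCount_inv]

theorem blockCount_rev_mul {n : ℕ} {β γ : Type*} [DecidableEq β] [LinearOrder γ]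
    (b : Fin n → β) (c : Fin n → γ) (σ : Equiv.Perm (Fin n)) :
    blockCount b (fun i => OrderDual.toDual (c i.rev)) (Fin.revPerm * σ)
      = fun a d => blockCount b c σ a (OrderDual.ofDual d) := by
  funext a d
  simp only [blockCount, Equiv.Perm.mul_apply, Fin.revPerm_apply, Fin.rev_rev]
  rfl

theorem blockIncreasing_rev_mul_iff {n : ℕ} {β : Type*} (b : Fin n → β)
    (σ : Equiv.Perm (Fin n)) :
    BlockIncreasing b (Fin.revPerm * σ) ↔ BlockDecreasing b σ := by
  simp [BlockIncreasing, BlockDecreasing]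

theorem blockIncreasing_rev_mul_inv_iff {n : ℕ} {γ : Type*} (c : Fin n → γ)
    (σ : Equiv.Perm (Fin n)) :
    BlockIncreasing (fun i => OrderDual.toDual (c i.rev)) (Fin.revPerm * σ)⁻¹
      ↔ BlockDecreasing c σ⁻¹ := by
  have hrev : (Fin.revPerm : Equiv.Perm (Fin n))⁻¹ = Fin.revPerm := rfl
  constructor
  · intro h i j hij hc
    have := h j.rev i.rev (by simpa using hij) (by simp [hc])
    simpa [mul_inv_rev, hrev] using this
  · intro h i j hij hc
    have := h j.rev i.rev (by simpa using hij) (by simpa using hc.symm)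
    simpa [mul_inv_rev, hrev] using this

theorem eq_of_blockCount_eq_of_blockDecreasing {n : ℕ} {β γ : Type*} [DecidableEq β]
    [LinearOrder γ] (b : Fin n → β) (c : Fin n → γ) (hc : Monotone c) (σ τ : Equiv.Perm (Fin n))
    (hσ : BlockDecreasing b σ) (hσ' : BlockDecreasing c σ⁻¹)
    (hτ : BlockDecreasing b τ) (hτ' : BlockDecreasing c τ⁻¹)
    (h : blockCount b c σ = blockCount b c τ) : σ = τ := by
  refine mul_left_cancel (a := Fin.revPerm) (eq_of_blockCount_eq b
    (fun i => OrderDual.toDual (c i.rev)) ?_ _ _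
    ((blockIncreasing_rev_mul_iff b σ).2 hσ) ((blockIncreasing_rev_mul_inv_iff c σ).2 hσ')
    ((blockIncreasing_rev_mul_iff b τ).2 hτ) ((blockIncreasing_rev_mul_inv_iff c τ).2 hτ') ?_)
  · intro i j hij
    exact hc (Fin.rev_le_rev.2 hij)
  · rw [blockCount_rev_mul, blockCount_rev_mul, h]

theorem exists_blockDecreasing {n : ℕ} {β γ : Type*} [DecidableEq β] [LinearOrder γ]
    (b : Fin n → β) (c : Fin n → γ) (σ : Equiv.Perm (Fin n)) :
    ∃ τ, blockCount b c τ = blockCount b c σ ∧ BlockDecreasing b τ ∧ BlockDecreasing c τ⁻¹ := by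
  obtain ⟨τ, h, h1, h2⟩ := exists_blockIncreasing b (fun i => OrderDual.toDual (c i.rev))
    (Fin.revPerm * σ)
  have hτ : τ = Fin.revPerm * (Fin.revPerm⁻¹ * τ) := by simp
  rw [hτ] at h h1 h2
  refine ⟨Fin.revPerm⁻¹ * τ, ?_, (blockIncreasing_rev_mul_iff b _).1 h1,
    (blockIncreasing_rev_mul_inv_iff c _).1 h2⟩
  rw [blockCount_rev_mul, blockCount_rev_mul] at h
  funext a d
  exact congrFun (congrFun h a) (OrderDual.toDual d)

/-- If `P` selects exactly one element of each double coset, then the involutions satisfying `P`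
are counted by the double cosets that contain an involution. -/
theorem card_involutions_eq_card_image_blockCount {n : ℕ} (b : Fin n → ℕ)
    (P : Equiv.Perm (Fin n) → Prop) [DecidablePred P]
    (hex : ∀ σ, ∃ τ, blockCount b b τ = blockCount b b σ ∧ P τ ∧ P τ⁻¹)
    (huniq : ∀ σ τ, P σ → P σ⁻¹ → P τ → P τ⁻¹ → blockCount b b σ = blockCount b b τ → σ = τ) :
    #{σ : Equiv.Perm (Fin n) | σ ^ 2 = 1 ∧ P σ}
      = Set.ncard (blockCount b b '' {σ : Equiv.Perm (Fin n) | σ ^ 2 = 1}) := by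
  have hinv : ∀ {σ : Equiv.Perm (Fin n)}, σ ^ 2 = 1 → σ⁻¹ = σ := fun {σ} h =>
    inv_eq_of_mul_eq_one_left (by rwa [← pow_two])
  rw [← Set.ncard_coe_finset, ← Set.InjOn.ncard_image (f := blockCount b b)]
  · congr 1
    ext M
    constructor
    · rintro ⟨σ, hσ, rfl⟩
      simp only [coe_filter, mem_univ, true_and, Set.mem_ofPred_eq] at hσ
      exact ⟨σ, hσ.1, rfl⟩
    · rintro ⟨σ, hσ, rfl⟩
      obtain ⟨τ, h, h1, h2⟩ := hex σ
      have hsymm : blockCount b b τ⁻¹ = blockCount b b τ := by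
        funext a d
        rw [blockCount_inv, h, ← blockCount_inv, hinv hσ]
      have hτ : τ⁻¹ = τ := huniq _ _ h2 (by rwa [inv_inv]) h1 h2 hsymm
      refine ⟨τ, ?_, h⟩
      simp only [coe_filter, mem_univ, true_and, Set.mem_ofPred_eq]
      refine ⟨?_, h1⟩
      rw [pow_two]
      nth_rewrite 1 [← hτ]
      simp
  · intro σ hσ τ hτ h
    simp only [coe_filter, mem_univ, true_and, Set.mem_ofPred_eq] at hσ hτ
    exact huniq σ τ hσ.2 (by rw [hinv hσ.1]; exact hσ.2) hτ.2 (by rw [hinv hτ.1]; exact hτ.2) h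

open Classical in
theorem card_blockIncreasing_involutions_eq {n : ℕ} (b : Fin n → ℕ) (hb : Monotone b) :
    #{σ : Equiv.Perm (Fin n) | σ ^ 2 = 1 ∧ BlockIncreasing b σ}
      = #{σ : Equiv.Perm (Fin n) | σ ^ 2 = 1 ∧ BlockDecreasing b σ} := by
  rw [card_involutions_eq_card_image_blockCount b _ (exists_blockIncreasing b b)
      (eq_of_blockCount_eq b b hb),
    card_involutions_eq_card_image_blockCount b _ (exists_blockDecreasing b b)
      (eq_of_blockCount_eq_of_blockDecreasing b b hb)]

/-! ### Descent sets -/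

/-- The set of descents of `π`, positions being counted from `1`. -/
def descentSet (n : ℕ) (π : Equiv.Perm (Fin n)) : Finset ℕ :=
  (Icc 1 (n - 1)).filter fun i => oneLine n π (i + 1) < oneLine n π i

theorem descentSet_subset (n : ℕ) (π : Equiv.Perm (Fin n)) : descentSet n π ⊆ Icc 1 (n - 1) :=
  filter_subset _ _

theorem succ_mem_descentSet {n : ℕ} (π : Equiv.Perm (Fin n)) {i : ℕ} (h : i + 1 < n) :
    i + 1 ∈ descentSet n π ↔ π ⟨i + 1, h⟩ < π ⟨i, by omega⟩ := by
  have h1 : i + 1 ≤ n - 1 := by omega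
  have h3 : i + 1 ≤ n := by omega
  simp [descentSet, oneLine, h, h1, h3, Nat.succ_le_iff]

/-- The block of each position, for the composition of `n` with partial sums in `S`. -/
def blockIndex (n : ℕ) (S : Finset ℕ) (i : Fin n) : ℕ := #{s ∈ S | 1 ≤ s ∧ s ≤ (i : ℕ)}

theorem blockIndex_monotone (n : ℕ) (S : Finset ℕ) : Monotone (blockIndex n S) := by
  intro i j hij
  refine card_le_card fun s hs => ?_
  have h : (i : ℕ) ≤ j := hij
  simp only [mem_filter] at hs ⊢
  exact ⟨hs.1, hs.2.1, hs.2.2.trans h⟩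

theorem blockIndex_eq_iff {n : ℕ} (S : Finset ℕ) {i j : Fin n} (hij : i ≤ j) :
    blockIndex n S i = blockIndex n S j ↔ ∀ s ∈ S, (i : ℕ) < s → ¬ s ≤ j := by
  have h : (i : ℕ) ≤ j := hij
  have hsub : {s ∈ S | 1 ≤ s ∧ s ≤ (i : ℕ)} ⊆ {s ∈ S | 1 ≤ s ∧ s ≤ (j : ℕ)} := by
    intro s hs
    simp only [mem_filter] at hs ⊢
    exact ⟨hs.1, hs.2.1, hs.2.2.trans h⟩
  constructor
  · intro he s hs his hsj
    have heq := eq_of_subset_of_card_le hsub he.ge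
    have : s ∈ {s ∈ S | 1 ≤ s ∧ s ≤ (i : ℕ)} := by
      rw [heq, mem_filter]
      exact ⟨hs, by omega, hsj⟩
    rw [mem_filter] at this
    omega
  · intro hs
    refine congrArg card (hsub.antisymm fun s hsj => ?_)
    simp only [mem_filter] at hsj ⊢
    have := hs s hsj.1
    exact ⟨hsj.1, hsj.2.1, by by_contra h'; exact this (not_le.1 h') hsj.2.2⟩

/-- A transitive relation holding at adjacent positions outside `S` holds along each block. -/
theorem forall_blockIndex_eq_iff {n : ℕ} (S : Finset ℕ) (r : Fin n → Fin n → Prop)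
    (htrans : ∀ i j k, r i j → r j k → r i k) :
    (∀ i j, i < j → blockIndex n S i = blockIndex n S j → r i j) ↔
      ∀ i (h : i + 1 < n), i + 1 ∉ S → r ⟨i, by omega⟩ ⟨i + 1, h⟩ := by
  constructor
  · intro hr i h hi
    refine hr _ _ (by simp [Fin.lt_def]) ((blockIndex_eq_iff S (by simp [Fin.le_def])).2 ?_)
    intro s hs h1 h2
    have : s = i + 1 := by
      simp only at h1 h2
      omega
    exact hi (this ▸ hs)
  · intro hr i j hij hb
    rw [blockIndex_eq_iff S hij.le] at hb
    obtain ⟨i, hi⟩ := i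
    obtain ⟨j, hj⟩ := j
    simp only [Fin.mk_lt_mk] at hij hb
    induction j, hij using Nat.le_induction with
    | base => exact hr i hj fun h => hb _ h (by omega) le_rfl
    | succ j hij ih =>
      refine htrans _ ⟨j, by omega⟩ _ (ih (by omega) fun s hs h1 h2 => hb s hs h1 (by omega)) ?_
      exact hr j hj fun h => hb _ h (by omega) le_rfl

theorem blockIncreasing_blockIndex_iff {n : ℕ} (S : Finset ℕ) (π : Equiv.Perm (Fin n)) :
    BlockIncreasing (blockIndex n S) π ↔ descentSet n π ⊆ S := by
  rw [BlockIncreasing, forall_blockIndex_eq_iff S (fun i j => π i < π j)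
    fun i j k => lt_trans]
  constructor
  · intro h s hs
    have hmem := mem_Icc.1 (descentSet_subset n π hs)
    obtain ⟨i, rfl⟩ : ∃ i, s = i + 1 := ⟨s - 1, by omega⟩
    by_contra hS
    exact absurd ((succ_mem_descentSet π (by omega)).1 hs) (h i (by omega) hS).not_gt
  · intro h i hi hS
    have := mt (@h (i + 1)) hS
    rw [succ_mem_descentSet π hi, not_lt] at this
    exact this.lt_of_ne (π.injective.ne (by simp))

theorem blockDecreasing_blockIndex_iff {n : ℕ} (S : Finset ℕ) (π : Equiv.Perm (Fin n)) :
    BlockDecreasing (blockIndex n S) π ↔ Icc 1 (n - 1) \ descentSet n π ⊆ S := by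
  rw [BlockDecreasing, forall_blockIndex_eq_iff S (fun i j => π j < π i)
    fun i j k h1 h2 => h2.trans h1]
  constructor
  · intro h s hs
    rw [mem_sdiff, mem_Icc] at hs
    obtain ⟨i, rfl⟩ : ∃ i, s = i + 1 := ⟨s - 1, by omega⟩
    by_contra hS
    exact hs.2 ((succ_mem_descentSet π (by omega)).2 (h i (by omega) hS))
  · intro h i hi hS
    have := mt (@h (i + 1)) hS
    rw [mem_sdiff, not_and, not_not, succ_mem_descentSet π hi] at this
    exact this (mem_Icc.2 ⟨by omega, by omega⟩)

/-- Descent sets and ascent sets of involutions are equidistributed. -/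
theorem card_involutions_descentSet_compl (n : ℕ) (Q : Finset ℕ → Prop) [DecidablePred Q] :
    #{π ∈ ({π | π ^ 2 = 1} : Finset (Equiv.Perm (Fin n))) | Q (descentSet n π)}
      = #{π ∈ ({π | π ^ 2 = 1} : Finset (Equiv.Perm (Fin n))) |
          Q (Icc 1 (n - 1) \ descentSet n π)} := by
  classical
  refine card_filter_comp_eq_of_card_filter_eq _ (descentSet n)
    (fun π => Icc 1 (n - 1) \ descentSet n π) (card_filter_eq_of_card_filter_subset _ _ _ ?_) Q
  intro S
  have := card_blockIncreasing_involutions_eq (blockIndex n S) (blockIndex_monotone n S)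
  simp only [blockIncreasing_blockIndex_iff, blockDecreasing_blockIndex_iff] at this
  simpa only [filter_filter] using this

theorem mem_descentSet_rev_conj {n : ℕ} (π : Equiv.Perm (Fin n)) {i : ℕ} (h1 : 1 ≤ i)
    (h2 : i < n) :
    i ∈ descentSet n (Fin.revPerm * π * Fin.revPerm) ↔ n - i ∈ descentSet n π := by
  obtain ⟨i, rfl⟩ : ∃ k, i = k + 1 := ⟨i - 1, by omega⟩
  obtain ⟨m, hm⟩ : ∃ m, n = m + i + 2 := ⟨n - i - 2, by omega⟩
  have hni : n - (i + 1) = m + 1 := by omega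
  rw [hni, succ_mem_descentSet _ h2, succ_mem_descentSet _ (by omega)]
  simp only [Equiv.Perm.mul_apply, Fin.revPerm_apply, Fin.rev_lt_rev]
  have e1 : Fin.rev (⟨i + 1, h2⟩ : Fin n) = ⟨m, by omega⟩ := by
    ext
    simp only [Fin.val_rev]
    omega
  have e2 : Fin.rev (⟨i, by omega⟩ : Fin n) = ⟨m + 1, by omega⟩ := by
    ext
    simp only [Fin.val_rev]
    omega
  rw [e1, e2]

/-- The peaks determined by a descent set. -/
def peakSet (n : ℕ) (D : Finset ℕ) : Finset ℕ := {i ∈ Icc 2 (n - 1) | i - 1 ∉ D ∧ i ∈ D}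

theorem pk_eq_card_peakSet (n : ℕ) (π : Equiv.Perm (Fin n)) :
    pk n π = #(peakSet n (descentSet n π)) := by
  refine congrArg card (filter_congr fun i hi => ?_)
  rw [mem_Icc] at hi
  obtain ⟨i, rfl⟩ : ∃ k, i = k + 2 := ⟨i - 2, by omega⟩
  rw [show i + 2 - 1 = i + 1 from rfl, succ_mem_descentSet π (by omega),
    succ_mem_descentSet π (i := i + 1) (by omega), not_lt]
  have hne : π ⟨i, by omega⟩ ≠ π ⟨i + 1, by omega⟩ := π.injective.ne (by simp)
  rw [hne.le_iff_lt]
  have h1 : i + 1 ≤ n := by omega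
  have h2 : i + 2 ≤ n := by omega
  have h3 : i + 2 + 1 ≤ n := by omega
  simp [oneLine, h1, h2, h3]

theorem card_peakSet_compl_rev_conj (n : ℕ) (π : Equiv.Perm (Fin n)) :
    #(peakSet n (Icc 1 (n - 1) \ descentSet n (Fin.revPerm * π * Fin.revPerm)))
      = #(peakSet n (descentSet n π)) := by
  refine card_nbij' (fun i => n + 1 - i) (fun i => n + 1 - i) ?_ ?_ ?_ ?_
  · intro i hi
    simp only [peakSet, mem_coe, mem_filter, mem_sdiff, mem_Icc] at hi ⊢
    obtain ⟨hr, h1, h2, h3⟩ := hi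
    rw [mem_descentSet_rev_conj π (by omega) (by omega)] at h1 h3
    rw [show n - (i - 1) = n + 1 - i by omega] at h1
    rw [show n + 1 - i - 1 = n - i by omega]
    refine ⟨by omega, h3, ?_⟩
    by_contra h
    exact h1 ⟨by omega, h⟩
  · intro i hi
    simp only [peakSet, mem_coe, mem_filter, mem_sdiff, mem_Icc] at hi ⊢
    obtain ⟨hr, h1, h2⟩ := hi
    rw [mem_descentSet_rev_conj π (by omega) (by omega),
      mem_descentSet_rev_conj π (by omega) (by omega),
      show n - (n + 1 - i - 1) = i by omega, show n - (n + 1 - i) = i - 1 by omega]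
    exact ⟨by omega, fun h => h.2 h2, by omega, h1⟩
  · intro i hi
    simp only [peakSet, mem_coe, mem_filter, mem_Icc] at hi
    simp only
    omega
  · intro i hi
    simp only [peakSet, mem_coe, mem_filter, mem_Icc] at hi
    simp only
    omega

theorem card_descentSet_rev_conj (n : ℕ) (π : Equiv.Perm (Fin n)) :
    #(descentSet n (Fin.revPerm * π * Fin.revPerm)) = #(descentSet n π) := by
  have hr : ∀ (σ : Equiv.Perm (Fin n)) {i}, i ∈ descentSet n σ → 1 ≤ i ∧ i < n := by
    intro σ i hi
    have := mem_Icc.1 (descentSet_subset n σ hi)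
    omega
  refine card_nbij' (fun i => n - i) (fun i => n - i) ?_ ?_ ?_ ?_
  · intro i hi
    have := hr _ hi
    exact (mem_descentSet_rev_conj π this.1 this.2).1 hi
  · intro i hi
    have := hr _ hi
    refine (mem_descentSet_rev_conj π (i := n - i) (by omega) (by omega)).2 ?_
    rwa [show n - (n - i) = i by omega]
  · intro i hi
    have := hr _ hi
    simp only
    omega
  · intro i hi
    have := hr _ hi
    simp only
    omega

theorem card_compl_descentSet_rev_conj (n : ℕ) (π : Equiv.Perm (Fin n)) :
    #(Icc 1 (n - 1) \ descentSet n (Fin.revPerm * π * Fin.revPerm)) + des n π = n - 1 := by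
  have h := card_sdiff_add_card_eq_card
    (descentSet_subset n (Fin.revPerm * π * Fin.revPerm))
  rw [card_descentSet_rev_conj, Nat.card_Icc] at h
  have : des n π = #(descentSet n π) := rfl
  omega

theorem stmt13 (n : ℕ) (hn : 1 ≤ n) (j k : ℕ) :
    Nat.card {π : Equiv.Perm (Fin n) // π ^ 2 = 1 ∧ pk n π = j ∧ des n π = k}
      = Nat.card {π : Equiv.Perm (Fin n) //
          π ^ 2 = 1 ∧ pk n π = j ∧ (des n π : ℤ) = (n : ℤ) - 1 - (k : ℤ)} := by
  have h := card_involutions_descentSet_compl n fun D => #(peakSet n D) = j ∧ #D = k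
  rw [filter_filter, filter_filter] at h
  rw [Nat.card_eq_fintype_card, Nat.card_eq_fintype_card, Fintype.card_subtype,
    Fintype.card_subtype]
  simp only [pk_eq_card_peakSet]
  refine h.trans (card_equiv (MulAut.conj (Fin.revPerm : Equiv.Perm (Fin n))).toEquiv
    fun π => ?_).symm
  have hconj : (MulAut.conj (Fin.revPerm : Equiv.Perm (Fin n))).toEquiv π
      = Fin.revPerm * π * Fin.revPerm := rfl
  have hsq : (Fin.revPerm * π * Fin.revPerm) ^ 2 = 1 ↔ π ^ 2 = 1 := by
    have : Fin.revPerm * π * Fin.revPerm = MulAut.conj (Fin.revPerm : Equiv.Perm (Fin n)) π := rfl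
    rw [this, ← map_pow, map_eq_one_iff _ (MulEquiv.injective _)]
  have hcard := card_compl_descentSet_rev_conj n π
  simp only [mem_filter, mem_univ, true_and]
  rw [hconj, hsq, card_peakSet_compl_rev_conj]
  refine and_congr_right fun _ => and_congr_right fun _ => ?_
  omega
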